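/- For every B > 0 and every t ∈ ℝ, ∫_{ℝ²} ∫_{ℝ²} |γ_B(x_⊥)|² |γ_B(y_⊥)|² / √(|x_⊥ − y_⊥|² + t²) dx_⊥ dy_⊥ = (1/√2) · V_U^B(t/√2). -/

import Mathlib

open MeasureTheory Real Filter

noncomputable section


/-- The effective Coulomb potential `V_U^B(t) = ∫₀^∞ e^{−u} / √(t² + 2u/B) du`. -/
def VU (B : ℝ) (t : ℝ) : ℝ :=
  ∫ u in Set.Ioi (0 : ℝ), Real.exp (-u) / Real.sqrt (t ^ 2 + 2 * u / B)

theorem sq_norm_add_sq_norm_sub {V : Type*} [NormedAddCommGroup V] [InnerProductSpace ℝ V]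
    (x w : V) :
    ‖x‖ ^ 2 + ‖x - w‖ ^ 2 = 2 * ‖x - (1 / 2 : ℝ) • w‖ ^ 2 + 1 / 2 * ‖w‖ ^ 2 := by
  rw [norm_sub_sq_real, norm_sub_sq_real, norm_smul, inner_smul_right, mul_pow]
  norm_num
  ring

theorem exp_sq_norm_mul_exp_sq_norm_sub {V : Type*} [NormedAddCommGroup V]
    [InnerProductSpace ℝ V] (b : ℝ) (x w : V) :
    Real.exp (-b * ‖x‖ ^ 2) * Real.exp (-b * ‖x - w‖ ^ 2) =
      Real.exp (-(2 * b) * ‖x - (1 / 2 : ℝ) • w‖ ^ 2) * Real.exp (-(b / 2) * ‖w‖ ^ 2) := by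
  rw [← Real.exp_add, ← Real.exp_add]
  congr 1
  linear_combination (-b) * sq_norm_add_sq_norm_sub x w

section Gaussian

variable {V : Type*} [NormedAddCommGroup V] [InnerProductSpace ℝ V] [FiniteDimensional ℝ V]
  [MeasurableSpace V] [BorelSpace V] {b : ℝ}

theorem integrable_exp_neg_mul_sq_norm (hb : 0 < b) :
    Integrable fun x : V => Real.exp (-b * ‖x‖ ^ 2) := by
  apply Integrable.of_integral_ne_zero
  rw [GaussianFourier.integral_rexp_neg_mul_sq_norm hb]
  positivity

theorem integrable_exp_sq_norm_mul_exp_sq_norm_sub (hb : 0 < b) (w : V) :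
    Integrable fun x : V => Real.exp (-b * ‖x‖ ^ 2) * Real.exp (-b * ‖x - w‖ ^ 2) := by
  simp_rw [exp_sq_norm_mul_exp_sq_norm_sub b _ w]
  exact ((integrable_exp_neg_mul_sq_norm (V := V) (b := 2 * b) (by positivity)).comp_sub_right
    ((1 / 2 : ℝ) • w)).mul_const _

theorem integral_exp_sq_norm_mul_exp_sq_norm_sub (hb : 0 < b) (w : V) :
    ∫ x : V, Real.exp (-b * ‖x‖ ^ 2) * Real.exp (-b * ‖x - w‖ ^ 2) =
      (π / (2 * b)) ^ (Module.finrank ℝ V / 2 : ℝ) * Real.exp (-(b / 2) * ‖w‖ ^ 2) := by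
  simp_rw [exp_sq_norm_mul_exp_sq_norm_sub b _ w]
  rw [integral_mul_const,
    integral_sub_right_eq_self (fun x : V => Real.exp (-(2 * b) * ‖x‖ ^ 2)),
    GaussianFourier.integral_rexp_neg_mul_sq_norm (by positivity)]

/-- The difference of two independent centred Gaussian vectors with the same variance is a centred
Gaussian vector with twice the variance. -/
theorem integral_integral_exp_sq_norm_mul_sub (hb : 0 < b) {k : V → ℝ}
    (hk : Integrable fun w : V => Real.exp (-(b / 2) * ‖w‖ ^ 2) * k w) :
    ∫ x : V, ∫ y : V, Real.exp (-b * ‖x‖ ^ 2) * Real.exp (-b * ‖y‖ ^ 2) * k (x - y) =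
      (π / (2 * b)) ^ (Module.finrank ℝ V / 2 : ℝ) *
        ∫ w : V, Real.exp (-(b / 2) * ‖w‖ ^ 2) * k w := by
  have hkm : AEStronglyMeasurable k volume := by
    have h : k = fun w : V => Real.exp (b / 2 * ‖w‖ ^ 2) *
        (Real.exp (-(b / 2) * ‖w‖ ^ 2) * k w) := by
      funext w
      rw [← mul_assoc, ← Real.exp_add]
      simp
    rw [h]
    exact (by fun_prop : Continuous fun w : V =>
      Real.exp (b / 2 * ‖w‖ ^ 2)).aestronglyMeasurable.mul hk.aestronglyMeasurable
  have hint : Integrable (Function.uncurry fun x w : V =>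
      Real.exp (-b * ‖x‖ ^ 2) * Real.exp (-b * ‖x - w‖ ^ 2) * k w) (volume.prod volume) := by
    have hm : AEStronglyMeasurable (Function.uncurry fun x w : V =>
        Real.exp (-b * ‖x‖ ^ 2) * Real.exp (-b * ‖x - w‖ ^ 2) * k w) (volume.prod volume) :=
      (by fun_prop : Continuous fun p : V × V => Real.exp (-b * ‖p.1‖ ^ 2) *
        Real.exp (-b * ‖p.1 - p.2‖ ^ 2)).aestronglyMeasurable.mul hkm.comp_snd
    refine (integrable_prod_iff' hm).2 ⟨Eventually.of_forall fun w =>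
      (integrable_exp_sq_norm_mul_exp_sq_norm_sub hb w).mul_const (k w), ?_⟩
    simp only [Function.uncurry_apply_pair, norm_mul, Real.norm_eq_abs, Real.abs_exp]
    simp_rw [integral_mul_const, integral_exp_sq_norm_mul_exp_sq_norm_sub hb, mul_assoc]
    simpa only [norm_mul, Real.norm_eq_abs, Real.abs_exp] using hk.norm.const_mul _
  calc
    _ = ∫ x : V, ∫ w : V, Real.exp (-b * ‖x‖ ^ 2) * Real.exp (-b * ‖x - w‖ ^ 2) * k w := by
      congr 1 with x
      rw [← integral_sub_left_eq_self _ volume x]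
      simp only [sub_sub_cancel]
    _ = ∫ w : V, ∫ x : V, Real.exp (-b * ‖x‖ ^ 2) * Real.exp (-b * ‖x - w‖ ^ 2) * k w :=
      integral_integral_swap hint
    _ = _ := by
      simp_rw [integral_mul_const, integral_exp_sq_norm_mul_exp_sq_norm_sub hb, mul_assoc]
      rw [integral_const_mul]

end Gaussian

theorem integral_sq_norm_euclideanSpace_fin_two (f : ℝ → ℝ) :
    ∫ w : EuclideanSpace ℝ (Fin 2), f (‖w‖ ^ 2) = π * ∫ u in Set.Ioi (0 : ℝ), f u := by
  rw [integral_fun_norm_addHaar volume fun r => f (r ^ 2),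
    ← integral_comp_rpow_Ioi_of_pos (g := f) two_pos]
  norm_num [Measure.real, mul_assoc, integral_const_mul, ENNReal.toReal_ofReal pi_nonneg]
  ring

theorem integrable_sq_norm_euclideanSpace_fin_two_iff {f : ℝ → ℝ} :
    Integrable (fun w : EuclideanSpace ℝ (Fin 2) => f (‖w‖ ^ 2)) ↔
      IntegrableOn f (Set.Ioi 0) := by
  rw [integrable_fun_norm_addHaar volume (f := fun r => f (r ^ 2)),
    ← integrableOn_Ioi_comp_rpow_iff' f two_ne_zero]
  norm_num

theorem integrableOn_exp_neg_mul_div_sqrt_add {b s : ℝ} (hb : 0 < b) (hs : 0 ≤ s) :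
    IntegrableOn (fun u => Real.exp (-b * u) * (Real.sqrt (u + s))⁻¹) (Set.Ioi 0) := by
  have h := integrableOn_rpow_mul_exp_neg_mul_rpow (s := -1 / 2) (p := 1) (by norm_num) one_pos hb
  refine Integrable.mono' h (by fun_prop) ?_
  filter_upwards [ae_restrict_mem measurableSet_Ioi] with u (hu : 0 < u)
  rw [Real.norm_of_nonneg (by positivity), Real.rpow_one, mul_comm, neg_div,
    Real.rpow_neg hu.le, ← Real.sqrt_eq_rpow]
  gcongr
  linarith

theorem one_div_sqrt_two_mul_VU (B : ℝ) (hB : 0 < B) (t : ℝ) :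
    1 / Real.sqrt 2 * VU B (t / Real.sqrt 2) =
      B / 4 * ∫ u in Set.Ioi (0 : ℝ), Real.exp (-(B / 4) * u) * (Real.sqrt (u + t ^ 2))⁻¹ := by
  have h := integral_comp_mul_left_Ioi'
    (fun u => Real.exp (-u) / Real.sqrt ((t / Real.sqrt 2) ^ 2 + 2 * u / B)) 0
    (b := B / 4) (by positivity)
  rw [mul_zero, smul_eq_mul] at h
  rw [VU, ← h, mul_left_comm, ← integral_const_mul]
  congr 2 with u
  rw [neg_mul, div_eq_mul_inv (Real.exp _), mul_left_comm, one_div, ← mul_inv,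
    ← Real.sqrt_mul zero_le_two, div_pow, Real.sq_sqrt zero_le_two]
  congr 3
  field_simp
  ring

/-- **Effective self-interaction in the lowest Landau level:**
`∫∫ |γ_B(x_⊥)|²|γ_B(y_⊥)|² / √(|x_⊥−y_⊥|² + t²) dx_⊥ dy_⊥ = (1/√2) V_U^B(t/√2)`. -/
theorem landau_density_self_interaction (B : ℝ) (hB : 0 < B) (t : ℝ) :
    (∫ x : EuclideanSpace ℝ (Fin 2), ∫ y : EuclideanSpace ℝ (Fin 2),
        (B / (2 * π) * Real.exp (-(B / 2) * ‖x‖ ^ 2)) *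
          (B / (2 * π) * Real.exp (-(B / 2) * ‖y‖ ^ 2)) /
            Real.sqrt (‖x - y‖ ^ 2 + t ^ 2)) =
      1 / Real.sqrt 2 * VU B (t / Real.sqrt 2) := by
  have hint : Integrable fun w : EuclideanSpace ℝ (Fin 2) =>
      Real.exp (-(B / 2 / 2) * ‖w‖ ^ 2) * (Real.sqrt (‖w‖ ^ 2 + t ^ 2))⁻¹ :=
    integrable_sq_norm_euclideanSpace_fin_two_iff.2
      (integrableOn_exp_neg_mul_div_sqrt_add (by positivity) (sq_nonneg t))
  calc
    _ = (B / (2 * π)) ^ 2 * ∫ x : EuclideanSpace ℝ (Fin 2), ∫ y : EuclideanSpace ℝ (Fin 2),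
        Real.exp (-(B / 2) * ‖x‖ ^ 2) * Real.exp (-(B / 2) * ‖y‖ ^ 2) *
          (Real.sqrt (‖x - y‖ ^ 2 + t ^ 2))⁻¹ := by
      simp_rw [← integral_const_mul]
      congr 1 with x
      congr 1 with y
      ring
    _ = _ := by
      rw [integral_integral_exp_sq_norm_mul_sub (by positivity) hint,
        integral_sq_norm_euclideanSpace_fin_two fun u =>
          Real.exp (-(B / 2 / 2) * u) * (Real.sqrt (u + t ^ 2))⁻¹,
        one_div_sqrt_two_mul_VU B hB, show B / 2 / 2 = B / 4 by ring]
      simp only [finrank_euclideanSpace, Fintype.card_fin, Nat.cast_ofNat, div_self_of_invertible,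
        Real.rpow_one]
      field_simp
      norm_num
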